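/- (Zaslavsky's formula) For any hyperplane arrangement 𝒜 in ℝ^n, the total number of chambers of 𝒜 equals (−1)^{rk(𝒜)} χ(𝒜, −1) = Σ_Y (−1)^{rk(𝒜) − rk(Y)} μ(Y, ⊤), the sum over all flats Y of 𝒜. -/

import Mathlib

open Finset MeasureTheory

noncomputable section

namespace CharElts

/-- Ambient Euclidean space `ℝ^n`. -/
abbrev V (n : ℕ) := EuclideanSpace ℝ (Fin n)

/-- An affine functional on `ℝ^n`; a hyperplane is its zero set. -/
abbrev AffForm (n : ℕ) := V n →ᵃ[ℝ] ℝ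

/-- The hyperplane determined by an affine functional. -/
def hypSet {n : ℕ} (ℓ : AffForm n) : Set (V n) := {x | ℓ x = 0}

variable {n : ℕ} (𝒜 : Finset (AffForm n))

/-- Index type for the hyperplanes of the arrangement. -/
abbrev Idx := {ℓ : AffForm n // ℓ ∈ 𝒜}

/-- The (possibly empty) set cut out by a sign vector `σ`. -/
def faceSet (σ : Idx 𝒜 → SignType) : Set (V n) :=
  {x | ∀ ℓ : Idx 𝒜, SignType.sign (ℓ.1 x) = σ ℓ}

/-- A face of the arrangement: a sign vector whose face set is nonempty. -/
@[ext] structure Face where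
  sgn : Idx 𝒜 → SignType
  nonempty : (faceSet 𝒜 sgn).Nonempty

open Classical in
instance : Fintype (Face 𝒜) :=
  Fintype.ofInjective Face.sgn (fun F G h => by cases F; cases G; simpa using h)

/-- The underlying point set of a face. -/
def Face.carrier (F : Face 𝒜) : Set (V n) := faceSet 𝒜 F.sgn

/-- A flat: a nonempty intersection of some subcollection of the hyperplanes
(the empty intersection gives all of `ℝ^n`). -/
def IsFlat (X : Set (V n)) : Prop :=
  X.Nonempty ∧ ∃ P : Idx 𝒜 → Prop, X = ⋂ ℓ ∈ {ℓ : Idx 𝒜 | P ℓ}, hypSet ℓ.1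

/-- The poset of flats, ordered by inclusion. -/
def Flat := {X : Set (V n) // IsFlat 𝒜 X}

instance : PartialOrder (Flat 𝒜) :=
  inferInstanceAs (PartialOrder {X : Set (V n) // IsFlat 𝒜 X})

lemma flat_eq_inter (X : Flat 𝒜) :
    X.1 = ⋂ ℓ ∈ {ℓ : Idx 𝒜 | X.1 ⊆ hypSet ℓ.1}, hypSet ℓ.1 := by
  obtain ⟨Z, hne, P, rfl⟩ := X
  apply subset_antisymm
  · intro x hx
    simp only [Set.mem_iInter, Set.mem_setOf_eq]
    intro ℓ hℓ
    exact hℓ hx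
  · intro x hx
    simp only [Set.mem_iInter, Set.mem_setOf_eq] at hx ⊢
    intro ℓ hℓ
    refine hx ℓ ?_
    intro y hy
    simp only [Set.mem_iInter, Set.mem_setOf_eq] at hy
    exact hy ℓ hℓ

open Classical in
instance : Fintype (Flat 𝒜) :=
  Fintype.ofInjective (fun X : Flat 𝒜 => {ℓ : Idx 𝒜 | X.1 ⊆ hypSet ℓ.1}) <| by
    intro X Y h
    dsimp only at h
    apply Subtype.ext
    rw [flat_eq_inter 𝒜 X, flat_eq_inter 𝒜 Y, h]

/-- The top flat: the whole ambient space. -/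
def topFlat : Flat 𝒜 :=
  ⟨Set.univ, ⟨⟨0, trivial⟩, fun _ => False, by simp⟩⟩

/-- The support of a face: the intersection of the hyperplanes on which it lies. -/
def supp (F : Face 𝒜) : Flat 𝒜 :=
  ⟨⋂ ℓ ∈ {ℓ : Idx 𝒜 | F.sgn ℓ = 0}, hypSet ℓ.1, by
    constructor
    · obtain ⟨x, hx⟩ := F.nonempty
      refine ⟨x, ?_⟩
      simp only [Set.mem_iInter, Set.mem_setOf_eq]
      intro ℓ hℓ
      have h0 := hx ℓ
      rw [hℓ] at h0
      simpa [hypSet, sign_eq_zero_iff] using h0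
    · exact ⟨fun ℓ => F.sgn ℓ = 0, rfl⟩⟩

/-- The dimension of (the affine hull of) a subset of `ℝ^n`. -/
def dimS (X : Set (V n)) : ℕ := Module.finrank ℝ (vectorSpan ℝ X)

open Classical in
/-- An element `w = Σ_F w^F H_F` of the Tits algebra (recorded by its coefficient
vector) is *characteristic of parameter `t`* if for every flat `X`, the sum of the
coefficients of the faces with support contained in `X` equals `t ^ rk X`,
where `rk X = dim X - d` and `d` is the common dimension of the minimal flats. -/
def IsCharacteristic (d : ℕ) (w : Face 𝒜 → ℝ) (t : ℝ) : Prop :=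
  ∀ X : Flat 𝒜,
    (∑ F : Face 𝒜, if (supp 𝒜 F).1 ⊆ X.1 then w F else 0) = t ^ (dimS X.1 - d)

/-- The sign vector of the Tits product `FG` of two faces. -/
def combineSgn {I : Type*} (σ τ : I → SignType) : I → SignType :=
  fun ℓ => if σ ℓ = 0 then τ ℓ else σ ℓ

open Classical in
/-- The product of the Tits algebra, on coefficient vectors:
`(u·v)^C = Σ_{F,G : FG = C} u^F v^G`, extending `H_F · H_G = H_{FG}` bilinearly. -/
def mulT (u v : Face 𝒜 → ℝ) : Face 𝒜 → ℝ :=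
  fun C => ∑ F : Face 𝒜, ∑ G : Face 𝒜,
    if combineSgn F.sgn G.sgn = C.sgn then u F * v G else 0

open Classical in
/-- The basis element `H_F` of the Tits algebra, as a coefficient vector. -/
def unitV (F : Face 𝒜) : Face 𝒜 → ℝ := fun G => if G = F then 1 else 0

/-- A chamber: a face whose sign vector is nowhere zero. -/
def IsChamber (F : Face 𝒜) : Prop := ∀ ℓ : Idx 𝒜, F.sgn ℓ ≠ 0

open Classical in
/-- `IsMoebius 𝒜 μ` states that `μ` is the Möbius function of the poset of
flats of `𝒜` (these conditions determine `μ` uniquely). -/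
def IsMoebius (μ : Flat 𝒜 → Flat 𝒜 → ℝ) : Prop :=
  (∀ X, μ X X = 1) ∧
  (∀ X Y : Flat 𝒜, X < Y →
    (∑ Z : Flat 𝒜, if X ≤ Z ∧ Z ≤ Y then μ X Z else 0) = 0) ∧
  (∀ X Y : Flat 𝒜, ¬ X ≤ Y → μ X Y = 0)

open Classical in
/-- `χ(𝒜^X, t) = Σ_{Y ≤ X} μ(Y, X) t^{rk Y}`: the characteristic polynomial of the
arrangement under the flat `X`.  Taking `X = ⊤` gives the characteristic
polynomial of `𝒜` itself. -/
def charPolyUnder (μ : Flat 𝒜 → Flat 𝒜 → ℝ) (d : ℕ) (X : Flat 𝒜) (t : ℝ) : ℝ :=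
  ∑ Y : Flat 𝒜, if Y ≤ X then μ Y X * t ^ (dimS Y.1 - d) else 0

/-- The space of directions `L = ⋂_{H ∈ 𝒜} dir(H)`: the intersection of the kernels of
the linear parts of the defining functionals. -/
def dirL : Submodule ℝ (V n) := ⨅ ℓ : Idx 𝒜, LinearMap.ker ℓ.1.linear

/-- A face is essentially bounded if its image in `ℝ^n / L` is bounded. -/
def EssBounded (F : Face 𝒜) : Prop :=
  Bornology.IsBounded ((dirL 𝒜).mkQ '' F.carrier)

/-- A hyperplane (zero set of a nonconstant affine functional) is nonempty. -/
lemma hyp_nonempty (ℓ : AffForm n) (h : ℓ.linear ≠ 0) : (hypSet ℓ).Nonempty := by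
  obtain ⟨v, hv⟩ : ∃ v, ℓ.linear v ≠ 0 := by
    by_contra hc
    push_neg at hc
    exact h (LinearMap.ext fun v => hc v)
  refine ⟨((-ℓ 0) / (ℓ.linear v)) • v, ?_⟩
  have hdecomp : ℓ (((-ℓ 0) / (ℓ.linear v)) • v)
      = ℓ.linear (((-ℓ 0) / (ℓ.linear v)) • v) + ℓ 0 := by
    conv_lhs => rw [show ((-ℓ 0) / (ℓ.linear v)) • v = ((-ℓ 0) / (ℓ.linear v)) • v +ᵥ (0 : V n)
      from (add_zero _).symm]
    rw [AffineMap.map_vadd]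
    rfl
  show ℓ _ = 0
  rw [hdecomp, LinearMap.map_smul, smul_eq_mul, div_mul_cancel₀ _ hv, neg_add_cancel]

/-!
A relatively open convex set `C` has Euler characteristic `(-1) ^ dim C`, and this number is
additive when `C` is cut by a hyperplane `f = 0`: either `C` meets only one of the three pieces, or
all of them are nonempty and `(-1) ^ k = (-1) ^ (k - 1) + 2 * (-1) ^ k`. Cutting a flat `X` by the
whole arrangement gives `∑ (-1) ^ dim F = (-1) ^ dim X`, the sum over the faces `F` supported
in `X`. Möbius inversion isolates the faces with support `⊤`, which are the chambers, each
contributing `(-1) ^ n`.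
-/

lemma neg_one_pow_sub {R : Type*} [Monoid R] [HasDistribNeg R] {a b : ℕ} (h : b ≤ a) :
    (-1 : R) ^ (a - b) = (-1) ^ a * (-1) ^ b := by
  obtain ⟨c, rfl⟩ := Nat.exists_eq_add_of_le' h
  rw [Nat.add_sub_cancel, pow_add, mul_assoc, ← pow_add, Even.neg_one_pow ⟨b, rfl⟩, mul_one]

lemma zero_mem_uIcc_of_sign_ne {K : Type*} [Zero K] [LinearOrder K] {a b : K}
    (h : SignType.sign a ≠ SignType.sign b) : (0 : K) ∈ Set.uIcc a b := by
  by_contra h0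
  rw [Set.mem_uIcc] at h0
  push Not at h0
  rcases lt_trichotomy a 0 with ha | rfl | ha
  · exact h (by rw [sign_neg ha, sign_neg (h0.1 ha.le)])
  · exact (h0.2 (h0.1 le_rfl).le).false
  · grind [sign_pos]

lemma finrank_inf_ker_add_one {K E : Type*} [Field K] [AddCommGroup E] [Module K E]
    {U : Submodule K E} [FiniteDimensional K U] {φ : E →ₗ[K] K} (hφ : ¬ U ≤ LinearMap.ker φ) :
    Module.finrank K (U ⊓ LinearMap.ker φ : Submodule K E) + 1 = Module.finrank K U := by
  have hne : φ.domRestrict U ≠ 0 := fun h => hφ fun u hu => LinearMap.congr_fun h ⟨u, hu⟩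
  rw [← Module.Dual.finrank_ker_add_one_of_ne_zero hne, LinearMap.ker_domRestrict,
    ← Submodule.map_comap_subtype, Submodule.finrank_map_subtype_eq]

section Affine

variable {K E : Type*} [Ring K] [AddCommGroup E] [Module K E]

lemma affineMap_add_smul (f : E →ᵃ[K] K) (x u : E) (t : K) :
    f (x + t • u) = f x + t * f.linear u := by
  simpa [add_comm] using f.map_vadd x (t • u)

lemma linear_eq_zero_of_mem_vectorSpan {f : E →ᵃ[K] K} {C : Set E} (hf : ∀ x ∈ C, f x = 0)
    {u : E} (hu : u ∈ vectorSpan K C) : f.linear u = 0 := by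
  have hle : vectorSpan K C ≤ LinearMap.ker f.linear := by
    rw [vectorSpan_def, Submodule.span_le]
    rintro _ ⟨x, hx, y, hy, rfl⟩
    simp [f.linearMap_vsub, hf x hx, hf y hy, -vsub_eq_sub]
  exact hle hu

open Classical in
variable (K) in
/-- The Euler characteristic with compact support of a relatively open convex set `C`, that is
`(-1) ^ dim C`, or `0` for the empty set. -/
def eulerChar (C : Set E) : ℤ :=
  if C.Nonempty then (-1) ^ Module.finrank K (vectorSpan K C) else 0

lemma eulerChar_of_nonempty {C : Set E} (hC : C.Nonempty) :
    eulerChar K C = (-1) ^ Module.finrank K (vectorSpan K C) := if_pos hC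

lemma eulerChar_empty : eulerChar K (∅ : Set E) = 0 := if_neg Set.not_nonempty_empty

end Affine

section RelOpenConvex

variable {K E : Type*} [Field K] [LinearOrder K] [IsStrictOrderedRing K]
  [AddCommGroup E] [Module K E]

lemma exists_pos_forall_sign_add_mul_eq {a : K} (ha : a ≠ 0) (b : K) :
    ∃ ε : K, 0 < ε ∧ ∀ t, 0 < t → t ≤ ε → SignType.sign (a + t * b) = SignType.sign a := by
  have hb : 0 < |b| + 1 := by positivity
  refine ⟨|a| / (|b| + 1), div_pos (abs_pos.2 ha) hb, fun t ht htε => ?_⟩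
  have hsmall : |t * b| < |a| := by
    rw [le_div_iff₀ hb] at htε
    rw [abs_mul, abs_of_pos ht]
    linarith
  obtain ⟨hlow, hupp⟩ := abs_lt.1 hsmall
  rcases ha.lt_or_gt with h | h
  · rw [abs_of_neg h] at hlow hupp
    rw [sign_neg h, sign_neg (by linarith)]
  · rw [abs_of_pos h] at hlow hupp
    rw [sign_pos h, sign_pos (by linarith)]

lemma convex_setOf_sign_eq (f : E →ᵃ[K] K) (s : SignType) :
    Convex K {x | SignType.sign (f x) = s} := by
  have h : Convex K {r : K | SignType.sign r = s} := by
    cases s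
    · simp [sign_eq_zero_iff]
    · simpa only [SignType.neg_eq_neg_one, sign_eq_neg_one_iff] using! convex_Iio (0 : K)
    · simpa only [SignType.pos_eq_one, sign_eq_one_iff] using! convex_Ioi (0 : K)
  exact h.affine_preimage f

variable (K) in
/-- A relatively open convex set. Openness in the affine span is phrased without a topology:
every direction of the span can be followed a little way from every point. -/
structure IsRelOpenConvex (C : Set E) : Prop where
  convex : Convex K C
  exists_add_smul_mem : ∀ x ∈ C, ∀ u ∈ vectorSpan K C, ∃ t : K, 0 < t ∧ x + t • u ∈ C

namespace IsRelOpenConvex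

variable {C : Set E} (hC : IsRelOpenConvex K C) (f : E →ᵃ[K] K)

include hC

lemma exists_add_smul_mem_sign_eq {x u : E} (hx : x ∈ C) (hu : u ∈ vectorSpan K C)
    (hfu : f x = 0 → f.linear u = 0) :
    ∃ t : K, 0 < t ∧ x + t • u ∈ C ∧ SignType.sign (f (x + t • u)) = SignType.sign (f x) := by
  obtain ⟨r, hr, hxr⟩ := hC.exists_add_smul_mem x hx u hu
  by_cases hfx : f x = 0
  · exact ⟨r, hr, hxr, by simp [affineMap_add_smul, hfu hfx]⟩
  obtain ⟨ε, hε, hsign⟩ := exists_pos_forall_sign_add_mul_eq hfx (f.linear u)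
  refine ⟨min r ε, lt_min hr hε, ?_, ?_⟩
  · have hmem := hC.convex.add_smul_mem hx hxr (t := min r ε / r)
      ⟨by positivity, div_le_one_of_le₀ (min_le_left _ _) hr.le⟩
    rwa [smul_smul, div_mul_cancel₀ _ hr.ne'] at hmem
  · rw [affineMap_add_smul]
    exact hsign _ (lt_min hr hε) (min_le_right _ _)

lemma mem_vectorSpan_inter_sign {x u : E} (hx : x ∈ C) (hu : u ∈ vectorSpan K C)
    (hfu : f x = 0 → f.linear u = 0) :
    u ∈ vectorSpan K (C ∩ {y | SignType.sign (f y) = SignType.sign (f x)}) := by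
  obtain ⟨t, ht, hmem, hsign⟩ := hC.exists_add_smul_mem_sign_eq f hx hu hfu
  rw [← Submodule.smul_mem_iff _ ht.ne']
  simpa using vsub_mem_vectorSpan K (s := C ∩ {y | SignType.sign (f y) = SignType.sign (f x)})
    ⟨hmem, hsign⟩ ⟨hx, rfl⟩

lemma vectorSpan_inter_sign {s : SignType} (hs : s ≠ 0)
    (hne : (C ∩ {x | SignType.sign (f x) = s}).Nonempty) :
    vectorSpan K (C ∩ {x | SignType.sign (f x) = s}) = vectorSpan K C := by
  obtain ⟨x, hx, rfl⟩ := hne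
  refine (vectorSpan_mono K Set.inter_subset_left).antisymm fun u hu => ?_
  exact hC.mem_vectorSpan_inter_sign f hx hu fun h => absurd (by rw [h, sign_zero]) hs

lemma vectorSpan_inter_sign_zero (hne : (C ∩ {x | SignType.sign (f x) = 0}).Nonempty) :
    vectorSpan K (C ∩ {x | SignType.sign (f x) = 0})
      = vectorSpan K C ⊓ LinearMap.ker f.linear := by
  obtain ⟨x, hx, hfx⟩ := hne
  refine le_antisymm (le_inf (vectorSpan_mono K Set.inter_subset_left) fun u hu => ?_) ?_
  · exact linear_eq_zero_of_mem_vectorSpan (fun y hy => sign_eq_zero_iff.1 hy.2) hu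
  · rintro u ⟨hu, hfu⟩
    simpa only [hfx.out] using hC.mem_vectorSpan_inter_sign f hx hu fun _ => hfu

lemma inter_sign (s : SignType) : IsRelOpenConvex K (C ∩ {x | SignType.sign (f x) = s}) where
  convex := hC.convex.inter (convex_setOf_sign_eq f s)
  exists_add_smul_mem := by
    rintro x ⟨hx, rfl⟩ u hu
    obtain ⟨t, ht, hmem, hsign⟩ := hC.exists_add_smul_mem_sign_eq f hx
      (vectorSpan_mono K Set.inter_subset_left hu) fun hfx =>
        linear_eq_zero_of_mem_vectorSpan
          (fun y hy => sign_eq_zero_iff.1 (hy.2.trans (by rw [hfx, sign_zero]))) hu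
    exact ⟨t, ht, hmem, hsign⟩

lemma exists_eq_zero_of_sign_ne {x y : E} (hx : x ∈ C) (hy : y ∈ C)
    (hxy : SignType.sign (f x) ≠ SignType.sign (f y)) : ∃ z ∈ C, f z = 0 :=
  (hC.convex.affine_image f).ordConnected.uIcc_subset (Set.mem_image_of_mem f hx)
    (Set.mem_image_of_mem f hy) (zero_mem_uIcc_of_sign_ne hxy)

lemma inter_sign_nonempty {x y : E} (hx : x ∈ C) (hfx : f x = 0) (hy : y ∈ C) (hfy : f y ≠ 0)
    (s : SignType) : (C ∩ {z | SignType.sign (f z) = s}).Nonempty := by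
  have hlin : f.linear (y - x) = f y := by
    rw [← vsub_eq_sub, f.linearMap_vsub, hfx, vsub_eq_sub, sub_zero]
  obtain ⟨t, ht, hmem⟩ := hC.exists_add_smul_mem x hx (((s : K) / f y) • (y - x))
    (Submodule.smul_mem _ _ (vsub_mem_vectorSpan K hy hx))
  refine ⟨_, hmem, ?_⟩
  have hs : SignType.sign (s : K) = s := by cases s <;> simp
  rw [Set.mem_ofPred_eq, affineMap_add_smul, map_smul, hlin, hfx, smul_eq_mul,
    div_mul_cancel₀ _ hfy, zero_add, sign_mul, sign_pos ht, one_mul, hs]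

end IsRelOpenConvex

lemma isRelOpenConvex_setOf_forall_eq_zero (S : Set (E →ᵃ[K] K)) :
    IsRelOpenConvex K {x | ∀ f ∈ S, f x = 0} where
  convex := by
    simp only [Set.ofPred_forall]
    exact convex_iInter₂ fun f _ => (convex_singleton (0 : K)).affine_preimage f
  exists_add_smul_mem x hx u hu := by
    refine ⟨1, one_pos, fun f hf => ?_⟩
    have hfu : f.linear u = 0 := linear_eq_zero_of_mem_vectorSpan (C := {x | ∀ f ∈ S, f x = 0})
      (fun y hy => hy f hf) hu
    rw [affineMap_add_smul, hx f hf, hfu, mul_zero, add_zero]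

end RelOpenConvex

section EulerChar

variable {K E : Type*} [Field K] [LinearOrder K] [AddCommGroup E] [Module K E]

lemma sum_eulerChar_inter_sign_of_const {C : Set E} {f : E →ᵃ[K] K} {r : SignType}
    (hr : ∀ x ∈ C, SignType.sign (f x) = r) :
    ∑ s, eulerChar K (C ∩ {x | SignType.sign (f x) = s}) = eulerChar K C := by
  have hsub : C ⊆ {x | SignType.sign (f x) = r} := hr
  rw [Fintype.sum_eq_single r fun s hs => ?_, Set.inter_eq_left.2 hsub]
  have hempty : C ∩ {x | SignType.sign (f x) = s} = ∅ :=
    Set.eq_empty_of_forall_notMem fun x hx => hs (hx.2.symm.trans (hr x hx.1))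
  rw [hempty, eulerChar_empty]

/-- The set on which a family of affine functionals has prescribed signs. -/
def signCell {ι : Type*} (ℓ : ι → E →ᵃ[K] K) (σ : ι → SignType) : Set E :=
  {x | ∀ i, SignType.sign (ℓ i x) = σ i}

variable [IsStrictOrderedRing K] [FiniteDimensional K E]

lemma IsRelOpenConvex.sum_eulerChar_inter_sign {C : Set E} (hC : IsRelOpenConvex K C)
    (f : E →ᵃ[K] K) :
    ∑ s, eulerChar K (C ∩ {x | SignType.sign (f x) = s}) = eulerChar K C := by
  by_cases hconst : ∃ r, ∀ x ∈ C, SignType.sign (f x) = r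
  · obtain ⟨r, hr⟩ := hconst
    exact sum_eulerChar_inter_sign_of_const hr
  push Not at hconst
  obtain ⟨x, hx, hfx⟩ := hconst 0
  obtain ⟨y, hy, hxy⟩ := hconst (SignType.sign (f x))
  obtain ⟨z, hz, hfz⟩ := hC.exists_eq_zero_of_sign_ne f hx hy hxy.symm
  have hne := hC.inter_sign_nonempty f hz hfz hx (sign_ne_zero.1 hfx)
  have hker : ¬ vectorSpan K C ≤ LinearMap.ker f.linear := fun hle => by
    have h := hle (vsub_mem_vectorSpan K hx hz)
    rw [LinearMap.mem_ker, f.linearMap_vsub, hfz, vsub_eq_sub, sub_zero] at h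
    exact hfx (by rw [h, sign_zero])
  rw [SignType.univ_eq, sum_insert (by decide), sum_insert (by decide), sum_singleton,
    eulerChar_of_nonempty (hne 0), eulerChar_of_nonempty (hne (-1)), eulerChar_of_nonempty (hne 1),
    eulerChar_of_nonempty ⟨x, hx⟩, hC.vectorSpan_inter_sign_zero f (hne 0),
    hC.vectorSpan_inter_sign f (by decide) (hne (-1)),
    hC.vectorSpan_inter_sign f (by decide) (hne 1), ← finrank_inf_ker_add_one hker]
  ring

theorem IsRelOpenConvex.sum_eulerChar_inter_signCell {ι : Type*} [Fintype ι] [DecidableEq ι]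
    {C : Set E} (hC : IsRelOpenConvex K C) (ℓ : ι → E →ᵃ[K] K) :
    ∑ σ, eulerChar K (C ∩ signCell ℓ σ) = eulerChar K C := by
  suffices h : ∀ [Fintype ι] [DecidableEq ι] (ℓ : ι → E →ᵃ[K] K) {C : Set E},
      IsRelOpenConvex K C → ∑ σ, eulerChar K (C ∩ signCell ℓ σ) = eulerChar K C from h ℓ hC
  clear! ℓ C
  induction ι using Finite.induction_empty_option with
  | of_equiv e ih =>
    intro _ _ ℓ C hC
    classical
    have := Fintype.ofEquiv _ e.symm
    rw [← ih (ℓ ∘ e) hC]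
    refine (Fintype.sum_equiv (e.arrowCongr (Equiv.refl _)) _ _ fun σ => ?_).symm
    congr 2
    ext x
    simp [signCell, ← e.forall_congr_right]
  | h_empty =>
    intro _ _ ℓ C _
    rw [Fintype.sum_unique]
    simp [signCell]
  | @h_option κ _ ih =>
    intro _ _ ℓ C hC
    classical
    have hcell (s : SignType) (τ : κ → SignType) :
        C ∩ signCell ℓ (Equiv.piOptionEquivProd.symm (s, τ))
          = (C ∩ {x | SignType.sign (ℓ none x) = s}) ∩ signCell (ℓ ∘ some) τ := by
      ext x
      simp [signCell, Option.forall, and_assoc]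
    rw [← Equiv.piOptionEquivProd.symm.sum_comp, Fintype.sum_prod_type]
    simp only [hcell, ih _ (hC.inter_sign (ℓ none) _), hC.sum_eulerChar_inter_sign]

end EulerChar

section Moebius

open scoped Matrix

variable {α R : Type*} [Fintype α] [LE α] [DecidableLE α] [DecidableEq α] [CommRing R]

theorem moebius_inversion {μ : α → α → R}
    (hμ : ∀ x y, ∑ z with z ≤ y, μ x z = if x = y then 1 else 0) {f g : α → R}
    (hg : ∀ y, g y = ∑ x with x ≤ y, f x) (y : α) : ∑ x, μ x y * g x = f y := by
  let Z : Matrix α α R := .of fun x y => if x ≤ y then 1 else 0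
  have hμZ : .of μ * Z = 1 := by
    ext x y
    simp [Z, Matrix.mul_apply, Matrix.one_apply, ← hμ, sum_filter]
  have hfZ : f ᵥ* Z = g := by
    ext y
    simp [Z, Matrix.vecMul, dotProduct, hg, sum_filter]
  calc ∑ x, μ x y * g x
      = (g ᵥ* .of μ) y := by simp [Matrix.vecMul, dotProduct, mul_comm]
    -- A left inverse of the zeta matrix `Z` is also a right inverse.
    _ = f y := by rw [← hfZ, Matrix.vecMul_vecMul, mul_eq_one_comm.1 hμZ, Matrix.vecMul_one]

end Moebius

section Arrangement

variable {n : ℕ} {𝒜 : Finset (AffForm n)}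

open Classical in
lemma IsMoebius.sum_filter_le {μ : Flat 𝒜 → Flat 𝒜 → ℝ} (hμ : IsMoebius 𝒜 μ) (X Y : Flat 𝒜) :
    ∑ Z with Z ≤ Y, μ X Z = if X = Y then 1 else 0 := by
  obtain ⟨hdiag, hsum, hzero⟩ := hμ
  have hinterval : ∑ Z with Z ≤ Y, μ X Z = ∑ Z with X ≤ Z ∧ Z ≤ Y, μ X Z := by
    simp only [sum_filter]
    refine sum_congr rfl fun Z _ => ?_
    by_cases hXZ : X ≤ Z
    · simp only [hXZ, true_and]
    · simp only [hzero X Z hXZ, ite_self]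
  rw [hinterval]
  split_ifs with hXY
  · subst hXY
    have hsingle : (univ.filter fun Z => X ≤ Z ∧ Z ≤ X) = {X} := by
      ext Z
      simp [← le_antisymm_iff, eq_comm]
    rw [hsingle, sum_singleton, hdiag]
  · by_cases hle : X ≤ Y
    · rw [sum_filter]
      exact hsum X Y (hle.lt_of_ne hXY)
    · rw [filter_false_of_mem fun Z _ hZ => hle (hZ.1.trans hZ.2), sum_empty]

lemma Flat.isRelOpenConvex (X : Flat 𝒜) : IsRelOpenConvex ℝ X.1 := by
  obtain ⟨_, -, P, rfl⟩ := X
  convert isRelOpenConvex_setOf_forall_eq_zero (Subtype.val '' {ℓ : Idx 𝒜 | P ℓ}) using 1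
  ext x
  simp [hypSet]

lemma Flat.eulerChar_eq (X : Flat 𝒜) : eulerChar ℝ X.1 = (-1) ^ dimS X.1 :=
  eulerChar_of_nonempty X.2.1

lemma mem_supp_iff {F : Face 𝒜} {x : V n} :
    x ∈ (supp 𝒜 F).1 ↔ ∀ ℓ : Idx 𝒜, F.sgn ℓ = 0 → ℓ.1 x = 0 := by
  simp [supp, hypSet]

lemma Face.carrier_subset_supp (F : Face 𝒜) : F.carrier ⊆ (supp 𝒜 F).1 := fun _ hx =>
  mem_supp_iff.2 fun ℓ hℓ => sign_eq_zero_iff.1 ((hx ℓ).trans hℓ)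

lemma Face.supp_le_of_mem {F : Face 𝒜} {X : Flat 𝒜} {x : V n} (hxF : x ∈ F.carrier)
    (hxX : x ∈ X.1) : supp 𝒜 F ≤ X := by
  intro y hy
  rw [flat_eq_inter 𝒜 X]
  refine Set.mem_iInter₂.2 fun ℓ hℓ => mem_supp_iff.1 hy ℓ ?_
  rw [← hxF ℓ, show ℓ.1 x = 0 from hℓ hxX, sign_zero]

open Classical in
lemma eulerChar_inter_carrier (X : Flat 𝒜) (F : Face 𝒜) :
    eulerChar ℝ (X.1 ∩ F.carrier) = if supp 𝒜 F ≤ X then eulerChar ℝ F.carrier else 0 := by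
  split_ifs with hle
  · rw [Set.inter_eq_right.2 (F.carrier_subset_supp.trans hle)]
  · have hempty : X.1 ∩ F.carrier = ∅ :=
      Set.eq_empty_of_forall_notMem fun x hx => hle (Face.supp_le_of_mem hx.2 hx.1)
    rw [hempty, eulerChar_empty]

open Classical in
theorem sum_eulerChar_carrier_of_supp_le (X : Flat 𝒜) :
    ∑ F with supp 𝒜 F ≤ X, eulerChar ℝ F.carrier = (-1) ^ dimS X.1 := by
  calc ∑ F with supp 𝒜 F ≤ X, eulerChar ℝ F.carrier
      = ∑ F : Face 𝒜, eulerChar ℝ (X.1 ∩ F.carrier) := by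
        simp only [sum_filter, eulerChar_inter_carrier]
    _ = ∑ σ, eulerChar ℝ (X.1 ∩ signCell (fun ℓ : Idx 𝒜 => ℓ.1) σ) := by
        refine Fintype.sum_of_injective Face.sgn (fun _ _ => Face.ext) _ _ (fun σ hσ => ?_)
          fun _ => rfl
        have hempty : X.1 ∩ signCell (fun ℓ : Idx 𝒜 => ℓ.1) σ = ∅ :=
          Set.eq_empty_of_forall_notMem fun x hx => hσ ⟨⟨σ, x, hx.2⟩, rfl⟩
        rw [hempty, eulerChar_empty]
    _ = (-1) ^ dimS X.1 := by
        rw [X.isRelOpenConvex.sum_eulerChar_inter_signCell, X.eulerChar_eq]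

open Classical in
theorem sum_moebius_mul_neg_one_pow_dimS {μ : Flat 𝒜 → Flat 𝒜 → ℝ} (hμ : IsMoebius 𝒜 μ)
    (X : Flat 𝒜) :
    ∑ Y, μ Y X * (-1) ^ dimS Y.1 = ((∑ F with supp 𝒜 F = X, eulerChar ℝ F.carrier : ℤ) : ℝ) := by
  refine moebius_inversion hμ.sum_filter_le (g := fun Y => (-1) ^ dimS Y.1)
    (f := fun X => ((∑ F with supp 𝒜 F = X, eulerChar ℝ F.carrier : ℤ) : ℝ)) (fun Y => ?_) X
  have hfiber := sum_fiberwise_eq_sum_filter univ (univ.filter (· ≤ Y)) (supp 𝒜)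
    fun F => eulerChar ℝ F.carrier
  simp only [mem_filter, mem_univ, true_and] at hfiber
  rw [← Int.cast_sum, hfiber, sum_eulerChar_carrier_of_supp_le]
  push_cast
  rfl

lemma supp_eq_topFlat_iff (h0 : 0 ∉ 𝒜) (F : Face 𝒜) : supp 𝒜 F = topFlat 𝒜 ↔ IsChamber 𝒜 F := by
  constructor
  · intro htop ℓ hℓ
    have hzero : ℓ.1 = 0 := AffineMap.ext fun x =>
      mem_supp_iff.1 (htop ▸ Set.mem_univ x : x ∈ (supp 𝒜 F).1) ℓ hℓ
    exact h0 (hzero ▸ ℓ.2)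
  · intro hF
    exact Subtype.ext (Set.eq_univ_of_forall fun _ => mem_supp_iff.2 fun ℓ hℓ => absurd hℓ (hF ℓ))

lemma IsChamber.isOpen_carrier {F : Face 𝒜} (hF : IsChamber 𝒜 F) : IsOpen F.carrier := by
  have hcarrier : F.carrier = ⋂ ℓ : Idx 𝒜, {x | SignType.sign (ℓ.1 x) = F.sgn ℓ} := by
    ext x
    simp [Face.carrier, faceSet]
  rw [hcarrier]
  refine isOpen_iInter_of_finite fun ℓ => ?_
  have hcont : Continuous ℓ.1 := ℓ.1.continuous_of_finiteDimensional
  have hne := hF ℓ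
  cases h : F.sgn ℓ
  · exact absurd h hne
  · simpa [sign_eq_neg_one_iff] using isOpen_lt hcont continuous_const
  · simpa [sign_eq_one_iff] using isOpen_lt continuous_const hcont

lemma dimS_of_isOpen {C : Set (V n)} (hC : IsOpen C) (hne : C.Nonempty) : dimS C = n := by
  rw [dimS, ← direction_affineSpan, hC.affineSpan_eq_top hne, AffineSubspace.direction_top,
    finrank_top, finrank_euclideanSpace_fin]

lemma IsChamber.eulerChar_carrier {F : Face 𝒜} (hF : IsChamber 𝒜 F) :
    eulerChar ℝ F.carrier = (-1) ^ n :=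
  (eulerChar_of_nonempty F.nonempty).trans <|
    congrArg _ (dimS_of_isOpen hF.isOpen_carrier F.nonempty)

lemma dimS_le (C : Set (V n)) : dimS C ≤ n :=
  (Submodule.finrank_le _).trans_eq finrank_euclideanSpace_fin

lemma le_dimS_of_isMin {d : ℕ} (hd : ∀ X : Flat 𝒜, IsMin X → dimS X.1 = d) (Y : Flat 𝒜) :
    d ≤ dimS Y.1 := by
  obtain ⟨X, hXY, hX⟩ := Finite.exists_le_minimal (p := fun _ : Flat 𝒜 => True) (a := Y) trivial
  rw [← hd X (minimal_true.1 hX)]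
  exact Submodule.finrank_mono (vectorSpan_mono ℝ hXY)

open Classical in
theorem card_isChamber_eq_sum (h0 : 0 ∉ 𝒜) {μ : Flat 𝒜 → Flat 𝒜 → ℝ} (hμ : IsMoebius 𝒜 μ) :
    ((univ.filter (fun C : Face 𝒜 => IsChamber 𝒜 C)).card : ℝ)
      = ∑ Y : Flat 𝒜, (-1 : ℝ) ^ (n - dimS Y.1) * μ Y (topFlat 𝒜) := by
  have hchambers : ∑ F with supp 𝒜 F = topFlat 𝒜, eulerChar ℝ F.carrier
      = (univ.filter (fun C : Face 𝒜 => IsChamber 𝒜 C)).card * (-1) ^ n := by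
    simp only [supp_eq_topFlat_iff h0]
    rw [sum_congr rfl fun F hF => (mem_filter.1 hF).2.eulerChar_carrier, sum_const, nsmul_eq_mul]
  have hinv := sum_moebius_mul_neg_one_pow_dimS hμ (topFlat 𝒜)
  rw [hchambers] at hinv
  push_cast at hinv
  calc ((univ.filter (fun C : Face 𝒜 => IsChamber 𝒜 C)).card : ℝ)
      = (-1) ^ n * ((univ.filter (fun C : Face 𝒜 => IsChamber 𝒜 C)).card * (-1) ^ n) := by
        rw [mul_left_comm, ← neg_one_pow_sub le_rfl, Nat.sub_self, pow_zero, mul_one]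
    _ = ∑ Y : Flat 𝒜, (-1 : ℝ) ^ (n - dimS Y.1) * μ Y (topFlat 𝒜) := by
        rw [← hinv, mul_sum]
        refine sum_congr rfl fun Y _ => ?_
        rw [neg_one_pow_sub (dimS_le Y.1), mul_left_comm, mul_comm]

end Arrangement

open Classical in
/-- **Zaslavsky's formula.** The number of chambers of `𝒜` equals
`(-1)^{rk 𝒜} χ(𝒜, -1) = Σ_Y (-1)^{rk 𝒜 - rk Y} μ(Y, ⊤)`. -/
theorem zaslavsky_chambers {n : ℕ} (𝒜 : Finset (AffForm n))
    (h𝒜 : ∀ ℓ ∈ 𝒜, ℓ.linear ≠ 0)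
    (d : ℕ) (hd : ∀ X : Flat 𝒜, IsMin X → dimS X.1 = d)
    (μ : Flat 𝒜 → Flat 𝒜 → ℝ) (hμ : IsMoebius 𝒜 μ) :
    ((univ.filter (fun C : Face 𝒜 => IsChamber 𝒜 C)).card : ℝ)
        = (-1 : ℝ) ^ (n - d) * charPolyUnder 𝒜 μ d (topFlat 𝒜) (-1) ∧
    ((univ.filter (fun C : Face 𝒜 => IsChamber 𝒜 C)).card : ℝ)
        = ∑ Y : Flat 𝒜, (-1 : ℝ) ^ ((n - d) - (dimS Y.1 - d)) * μ Y (topFlat 𝒜) := by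
  have hle (Y : Flat 𝒜) : d ≤ dimS Y.1 := le_dimS_of_isMin hd Y
  have hsum := card_isChamber_eq_sum (fun h => h𝒜 0 h rfl) hμ
  constructor
  · rw [hsum, charPolyUnder, mul_sum]
    refine sum_congr rfl fun Y _ => ?_
    rw [if_pos (show Y ≤ topFlat 𝒜 from Set.subset_univ _), mul_left_comm,
      ← neg_one_pow_sub (Nat.sub_le_sub_right (dimS_le Y.1) d), tsub_tsub_tsub_cancel_right (hle Y),
      mul_comm]
  · simp only [tsub_tsub_tsub_cancel_right (hle _), hsum]

end CharElts
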